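/- Let H be a finite set of h affine hyperplanes in ℝ^k. Then the complement ℝ^k \ ⋃H has at most ∑_{i=0}^{k} C(h, i) connected components, where C(h,i) denotes the binomial coefficient; in particular the number of connected components is at most (h+1)^k. -/

import Mathlib

open scoped RealInnerProductSpace

/-- An affine hyperplane in `ℝ^k`: a set `{x | ⟪a, x⟫ = b}` with `a ≠ 0`. -/
def IsAffineHyperplane {k : ℕ} (H : Set (EuclideanSpace ℝ (Fin k))) : Prop :=
  ∃ (a : EuclideanSpace ℝ (Fin k)) (b : ℝ), a ≠ 0 ∧ H = {x | ⟪a, x⟫ = b}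

/-!
Record for each point the set of hyperplanes on whose positive side it lies. Points of the
complement with the same record form a convex set, so there are at most as many components as
records. A linear dependence among the normals of some hyperplanes forbids the sign pattern of its
coefficients or the opposite one, so only linearly independent sets of normals are shattered by the
records. The bound is then the Sauer–Shelah lemma.
-/

theorem sum_range_choose_le_add_one_pow (n d : ℕ) :
    ∑ i ∈ Finset.range (d + 1), n.choose i ≤ (n + 1) ^ d := by
  rw [add_pow]
  refine Finset.sum_le_sum fun i hi => ?_
  have choose_pos : 0 < d.choose i := Nat.choose_pos (Finset.mem_range_succ_iff.1 hi)
  calc n.choose i ≤ n ^ i := Nat.choose_le_pow n i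
    _ ≤ n ^ i * d.choose i := Nat.le_mul_of_pos_right _ choose_pos
    _ = n ^ i * 1 ^ (d - i) * d.choose i := by rw [one_pow, mul_one]

theorem card_le_sum_range_choose_of_vcDim_le {α : Type*} [Fintype α] [DecidableEq α]
    {𝒜 : Finset (Finset α)} {d : ℕ} (h𝒜 : 𝒜.vcDim ≤ d) :
    𝒜.card ≤ ∑ i ∈ Finset.range (d + 1), (Fintype.card α).choose i :=
  calc 𝒜.card ≤ 𝒜.shatterer.card := 𝒜.card_le_card_shatterer
    _ ≤ ∑ i ∈ Finset.Iic 𝒜.vcDim, (Fintype.card α).choose i := Finset.card_shatterer_le_sum_vcDim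
    _ ≤ ∑ i ∈ Finset.range (d + 1), (Fintype.card α).choose i := by
      refine Finset.sum_le_sum_of_subset fun i hi => ?_
      exact Finset.mem_range_succ_iff.2 ((Finset.mem_Iic.1 hi).trans h𝒜)

section Patterns

variable {ι X 𝕜 : Type*} [Fintype ι] [LinearOrder 𝕜]

/-- The sign pattern of a point `x` with respect to functions `f i` and thresholds `b i`, encoded
as the set of indices where `f i x` exceeds `b i`. The indices with `f i x = b i` are grouped with
those where `f i x < b i`. -/
def positiveIndices (f : ι → X → 𝕜) (b : ι → 𝕜) (x : X) : Finset ι :=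
  {i | b i < f i x}

theorem mem_positiveIndices {f : ι → X → 𝕜} {b : ι → 𝕜} {x : X} {i : ι} :
    i ∈ positiveIndices f b x ↔ b i < f i x := by
  simp [positiveIndices]

/-- The set family of all sign patterns of points, to which the Sauer–Shelah lemma is applied. -/
noncomputable def positivePatterns (f : ι → X → 𝕜) (b : ι → 𝕜) : Finset (Finset ι) :=
  (Set.range (positiveIndices f b)).toFinite.toFinset

theorem mem_positivePatterns {f : ι → X → 𝕜} {b : ι → 𝕜} {s : Finset ι} :
    s ∈ positivePatterns f b ↔ ∃ x, positiveIndices f b x = s := by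
  simp [positivePatterns]

variable [DecidableEq ι] {f : ι → X → 𝕜} {b : ι → 𝕜}

theorem exists_forall_lt_iff_of_shatters {s : Finset ι} (hs : (positivePatterns f b).Shatters s)
    (p : ι → Prop) : ∃ x, ∀ i ∈ s, b i < f i x ↔ p i := by
  classical
  obtain ⟨u, hu, hsu⟩ := hs (Finset.filter_subset p s)
  obtain ⟨x, rfl⟩ := mem_positivePatterns.1 hu
  refine ⟨x, fun i hi => ?_⟩
  simpa [hi, mem_positiveIndices] using Finset.ext_iff.1 hsu i

variable [Field 𝕜] [IsStrictOrderedRing 𝕜]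

theorem linearIndepOn_of_shatters_positivePatterns {s : Finset ι}
    (hs : (positivePatterns f b).Shatters s) : LinearIndepOn 𝕜 f s := by
  rw [linearIndepOn_finset_iff]
  intro c hc
  by_contra! ⟨j, hj, hcj⟩
  obtain ⟨x, hx⟩ := exists_forall_lt_iff_of_shatters hs (0 < c ·)
  obtain ⟨y, hy⟩ := exists_forall_lt_iff_of_shatters hs (c · < 0)
  have sum_eq_zero (z : X) : ∑ i ∈ s, c i * f i z = 0 := by
    simpa using congrFun hc z
  have term_lt (i : ι) (hi : i ∈ s) (hci : c i ≠ 0) : c i * f i y < c i * f i x := by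
    rcases hci.lt_or_gt with neg | pos
    · have f_x_le : f i x ≤ b i := not_lt.1 fun h => neg.not_gt ((hx i hi).1 h)
      exact mul_lt_mul_of_neg_left (f_x_le.trans_lt ((hy i hi).2 neg)) neg
    · have f_y_le : f i y ≤ b i := not_lt.1 fun h => pos.not_gt ((hy i hi).1 h)
      exact mul_lt_mul_of_pos_left (f_y_le.trans_lt ((hx i hi).2 pos)) pos
  have term_le (i : ι) (hi : i ∈ s) : c i * f i y ≤ c i * f i x := by
    by_cases hci : c i = 0
    · simp [hci]
    · exact (term_lt i hi hci).le
  have sum_lt := Finset.sum_lt_sum term_le ⟨j, hj, term_lt j hj hcj⟩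
  rw [sum_eq_zero, sum_eq_zero] at sum_lt
  exact sum_lt.false

theorem vcDim_positivePatterns_le_finrank {W : Submodule 𝕜 (X → 𝕜)} [FiniteDimensional 𝕜 W]
    (hf : ∀ i, f i ∈ W) : (positivePatterns f b).vcDim ≤ Module.finrank 𝕜 W := by
  refine Finset.sup_le fun s hs => ?_
  have indep : LinearIndependent 𝕜 fun i : s => (⟨f i, hf i⟩ : W) :=
    .of_comp W.subtype (linearIndepOn_of_shatters_positivePatterns (Finset.mem_shatterer.1 hs))
  simpa using indep.fintype_card_le_finrank

end Patterns

theorem mk_connectedComponents_le_card_of_isPreconnected_fibers {Y β : Type*} [TopologicalSpace Y]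
    {g : Y → β} {t : Finset β} (hgt : ∀ y, g y ∈ t) (hg : ∀ z, IsPreconnected (g ⁻¹' {z})) :
    Cardinal.mk (ConnectedComponents Y) ≤ t.card := by
  let rep : ConnectedComponents Y → Y := Quotient.out
  have mk_rep (c : ConnectedComponents Y) : (rep c : ConnectedComponents Y) = c := Quotient.out_eq c
  have injective : Function.Injective fun c => (⟨g (rep c), hgt _⟩ : t) := by
    intro c d hcd
    have g_rep_eq : g (rep c) = g (rep d) := congrArg Subtype.val hcd
    rw [← mk_rep c, ← mk_rep d, ConnectedComponents.coe_eq_coe']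
    exact (hg (g (rep d))).subset_connectedComponent rfl g_rep_eq
  simpa using Cardinal.lift_mk_le_lift_mk_of_injective injective

section Complement

variable {ι E : Type*} [Fintype ι] [AddCommGroup E]

theorem convex_setOf_positiveIndices_eq {𝕜 : Type*} [Field 𝕜] [LinearOrder 𝕜]
    [IsStrictOrderedRing 𝕜] [Module 𝕜 E] (f : ι → Module.Dual 𝕜 E) (b : ι → 𝕜) (s : Finset ι) :
    Convex 𝕜 {x | (∀ i, f i x ≠ b i) ∧ positiveIndices (fun i => ⇑(f i)) b x = s} := by
  classical
  have eq_iInter : {x | (∀ i, f i x ≠ b i) ∧ positiveIndices (fun i => ⇑(f i)) b x = s} =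
      ⋂ i, if i ∈ s then {x | b i < f i x} else {x | f i x < b i} := by
    ext x
    simp only [Finset.ext_iff, mem_positiveIndices, ← forall_and, Set.mem_ofPred_eq, Set.mem_iInter]
    refine forall_congr' fun i => ?_
    split_ifs with hi
    · simpa [hi] using fun h : b i < f i x => h.ne'
    · simp [hi, lt_iff_le_and_ne (a := f i x), and_comm]
  rw [eq_iInter]
  refine convex_iInter fun i => ?_
  split_ifs
  · exact convex_halfSpace_gt (f i).isLinear (b i)
  · exact convex_halfSpace_lt (f i).isLinear (b i)

variable [Module ℝ E] [TopologicalSpace E] [ContinuousAdd E] [ContinuousSMul ℝ E]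

theorem mk_connectedComponents_le_card_positivePatterns (f : ι → Module.Dual ℝ E) (b : ι → ℝ) :
    Cardinal.mk (ConnectedComponents {x | ∀ i, f i x ≠ b i}) ≤
      (positivePatterns (fun i => ⇑(f i)) b).card := by
  refine mk_connectedComponents_le_card_of_isPreconnected_fibers
    (g := fun x => positiveIndices (fun i => ⇑(f i)) b x.1)
    (fun x => mem_positivePatterns.2 ⟨x, rfl⟩) fun s => ?_
  rw [← Topology.IsInducing.subtypeVal.isPreconnected_image]
  convert (convex_setOf_positiveIndices_eq f b s).isPreconnected using 1
  ext x
  simp [and_comm]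

theorem mk_connectedComponents_le_sum_range_choose {V : Submodule ℝ (Module.Dual ℝ E)}
    [FiniteDimensional ℝ V] {f : ι → Module.Dual ℝ E} (hf : ∀ i, f i ∈ V) (b : ι → ℝ) :
    Cardinal.mk (ConnectedComponents {x | ∀ i, f i x ≠ b i}) ≤
      ((∑ i ∈ Finset.range (Module.finrank ℝ V + 1), (Fintype.card ι).choose i : ℕ) :
        Cardinal) := by
  classical
  let toFun := LinearMap.ltoFun ℝ E ℝ ℝ
  have vcDim_le : (positivePatterns (fun i => ⇑(f i)) b).vcDim ≤ Module.finrank ℝ V :=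
    (vcDim_positivePatterns_le_finrank fun i => Submodule.mem_map_of_mem (f := toFun) (hf i)).trans
      (Submodule.finrank_map_le toFun V)
  exact (mk_connectedComponents_le_card_positivePatterns f b).trans
    (Nat.cast_le.2 (card_le_sum_range_choose_of_vcDim_le vcDim_le))

theorem hyperplane_arrangement_components_general (V : Submodule ℝ (Module.Dual ℝ E))
    [FiniteDimensional ℝ V] (H : Finset (Set E))
    (hH : ∀ Hp ∈ H, ∃ f ∈ V, ∃ b : ℝ, Hp = {x | f x = b}) :
    Cardinal.mk (ConnectedComponents ↥((⋃₀ (H : Set (Set E)))ᶜ)) ≤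
        ((∑ i ∈ Finset.range (Module.finrank ℝ V + 1), H.card.choose i : ℕ) : Cardinal) ∧
    Cardinal.mk (ConnectedComponents ↥((⋃₀ (H : Set (Set E)))ᶜ)) ≤
        (((H.card + 1) ^ Module.finrank ℝ V : ℕ) : Cardinal) := by
  choose f hfV b hfb using fun Hp : H => hH Hp Hp.2
  have compl_eq : (⋃₀ (H : Set (Set E)))ᶜ = {x | ∀ Hp, f Hp x ≠ b Hp} := by
    ext x
    have mem_iff (Hp : H) : x ∈ Hp.1 ↔ f Hp x = b Hp := by
      conv_lhs => rw [hfb Hp, Set.mem_ofPred_eq]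
    simp [← mem_iff]
  have sum_bound := mk_connectedComponents_le_sum_range_choose hfV b
  rw [← compl_eq, Fintype.card_coe] at sum_bound
  exact ⟨sum_bound, sum_bound.trans (Nat.cast_le.2 (sum_range_choose_le_add_one_pow _ _))⟩

end Complement

/-- Lemma 1: the complement of `h` affine hyperplanes in `ℝ^k` has at most
`∑_{i=0}^{k} C(h,i)` connected components; in particular at most `(h+1)^k`. -/
theorem hyperplane_arrangement_components {k h : ℕ}
    (H : Finset (Set (EuclideanSpace ℝ (Fin k)))) (hcard : H.card = h)
    (hH : ∀ Hp ∈ H, IsAffineHyperplane Hp) :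
    Cardinal.mk (ConnectedComponents ↥((⋃₀ (H : Set (Set (EuclideanSpace ℝ (Fin k)))))ᶜ)) ≤
        ((∑ i ∈ Finset.range (k + 1), h.choose i : ℕ) : Cardinal) ∧
    Cardinal.mk (ConnectedComponents ↥((⋃₀ (H : Set (Set (EuclideanSpace ℝ (Fin k)))))ᶜ)) ≤
        (((h + 1) ^ k : ℕ) : Cardinal) := by
  simpa [hcard] using hyperplane_arrangement_components_general ⊤ H fun Hp hHp =>
    let ⟨a, b, _, hab⟩ := hH Hp hHp
    ⟨innerₗ _ a, Submodule.mem_top, b, hab⟩
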